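/- Let (m_t)_{t∈ℤ} be a sequence of nonzero reals and suppose there are constants C > 0 and λ > 1 such that ∏_{n=0}^{k−1} |m_{t+n}| ≤ C⁻¹·λ^{−k} for all t ∈ ℤ and all k ≥ 1. Then for every bounded sequence η = (η_t)_{t∈ℤ} of reals, the system ζ_t − m_{t−1}·ζ_{t−1} = η_t (t ∈ ℤ) has a unique bounded solution ζ = (ζ_t)_{t∈ℤ}, given by ζ_t = η_t + Σ_{k=0}^{∞} (∏_{n=0}^{k} m_{t−1−k+n})·η_{t−1−k}, and this solution satisfies |ζ_t − η_t| ≤ ‖η‖∞·C⁻¹·(λ−1)⁻¹ for all t ∈ ℤ. -/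

import Mathlib

noncomputable section

/-- A bounded bi-infinite real sequence (an element of l∞(ℤ,ℝ)). -/
def BddSeq (ζ : ℤ → ℝ) : Prop := ∃ M : ℝ, ∀ t : ℤ, |ζ t| ≤ M

/-- The weighted product `(∏_{n=0}^{k} m_{t-1-k+n}) * η_{t-1-k}`. -/
def seriesTerm (m η : ℤ → ℝ) (t : ℤ) (k : ℕ) : ℝ :=
  (∏ n ∈ Finset.range (k + 1), m (t - 1 - k + n)) * η (t - 1 - k)

/-- The candidate solution `η_t + ∑_k (∏_{n=0}^{k} m_{t-1-k+n}) * η_{t-1-k}`. -/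
def seriesSolution (m η : ℤ → ℝ) (t : ℤ) : ℝ := η t + ∑' k : ℕ, seriesTerm m η t k

lemma seriesTerm_zero (m η : ℤ → ℝ) (t : ℤ) :
    seriesTerm m η t 0 = m (t - 1) * η (t - 1) := by
  simp [seriesTerm]

lemma seriesTerm_succ (m η : ℤ → ℝ) (t : ℤ) (k : ℕ) :
    seriesTerm m η t (k + 1) = m (t - 1) * seriesTerm m η (t - 1) k := by
  have h₁ : t - 1 - ((k + 1 : ℕ) : ℤ) = t - 1 - 1 - k := by push_cast; ring
  have h₂ : t - 1 - 1 - (k : ℤ) + ((k + 1 : ℕ) : ℤ) = t - 1 := by push_cast; ring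
  rw [seriesTerm, seriesTerm, Finset.prod_range_succ, h₁, h₂]
  ring

lemma hasSum_geometric_succ {lam : ℝ} (hlam : 1 < lam) (A : ℝ) :
    HasSum (fun k : ℕ => A * lam⁻¹ ^ (k + 1)) (A * (lam - 1)⁻¹) := by
  have h := (hasSum_geometric_of_lt_one (inv_nonneg.2 (zero_le_one.trans hlam.le))
    (inv_lt_one_of_one_lt₀ hlam)).mul_left (A * lam⁻¹)
  have hpos : lam ≠ 0 := by positivity
  have hsub : lam - 1 ≠ 0 := by linarith
  have hval : A * lam⁻¹ * (1 - lam⁻¹)⁻¹ = A * (lam - 1)⁻¹ := by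
    have : 1 - lam⁻¹ = (lam - 1) * lam⁻¹ := by field_simp
    rw [this]
    field_simp
  rw [hval] at h
  simpa only [pow_succ', mul_assoc] using h

lemma BddSeq.abs_le_iSup {η : ℤ → ℝ} (hη : BddSeq η) (t : ℤ) : |η t| ≤ ⨆ s : ℤ, |η s| := by
  obtain ⟨M, hM⟩ := hη
  exact le_ciSup (f := fun s => |η s|) ⟨M, by rintro _ ⟨s, rfl⟩; exact hM s⟩ t

/-- Products of `k ≥ 1` consecutive slopes are bounded by `C⁻¹ * lam⁻¹ ^ k`. -/
def SlopeDecay (m : ℤ → ℝ) (C lam : ℝ) : Prop :=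
  ∀ t : ℤ, ∀ k : ℕ, 1 ≤ k → ∏ n ∈ Finset.range k, |m (t + n)| ≤ C⁻¹ * lam⁻¹ ^ k

lemma abs_seriesTerm_le {m : ℤ → ℝ} {C lam : ℝ}
    (hprod : SlopeDecay m C lam) {η : ℤ → ℝ} (hη : BddSeq η) (t : ℤ) (k : ℕ) :
    |seriesTerm m η t k| ≤ (⨆ s : ℤ, |η s|) * C⁻¹ * lam⁻¹ ^ (k + 1) := by
  have hp := hprod (t - 1 - k) (k + 1) (Nat.le_add_left 1 k)
  have hp₀ : 0 ≤ ∏ n ∈ Finset.range (k + 1), |m (t - 1 - k + n)| :=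
    Finset.prod_nonneg fun _ _ => abs_nonneg _
  rw [seriesTerm, abs_mul, Finset.abs_prod]
  calc _ ≤ (C⁻¹ * lam⁻¹ ^ (k + 1)) * ⨆ s : ℤ, |η s| :=
        mul_le_mul hp (hη.abs_le_iSup _) (abs_nonneg _) (hp₀.trans hp)
    _ = _ := by ring

lemma summable_seriesTerm {m : ℤ → ℝ} {C lam : ℝ}
    (hprod : SlopeDecay m C lam) (hlam : 1 < lam) {η : ℤ → ℝ} (hη : BddSeq η) (t : ℤ) :
    Summable (seriesTerm m η t) :=
  (hasSum_geometric_succ hlam _).summable.of_norm_bounded (abs_seriesTerm_le hprod hη t)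

lemma abs_seriesSolution_sub_le {m : ℤ → ℝ} {C lam : ℝ}
    (hprod : SlopeDecay m C lam) (hlam : 1 < lam) {η : ℤ → ℝ} (hη : BddSeq η) (t : ℤ) :
    |seriesSolution m η t - η t| ≤ (⨆ s : ℤ, |η s|) * C⁻¹ * (lam - 1)⁻¹ := by
  rw [seriesSolution, add_sub_cancel_left]
  exact tsum_of_norm_bounded (f := seriesTerm m η t) (hasSum_geometric_succ hlam _)
    (abs_seriesTerm_le hprod hη t)

lemma bddSeq_seriesSolution {m : ℤ → ℝ} {C lam : ℝ}
    (hprod : SlopeDecay m C lam) (hlam : 1 < lam) {η : ℤ → ℝ} (hη : BddSeq η) :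
    BddSeq (seriesSolution m η) := by
  refine ⟨(⨆ s : ℤ, |η s|) * C⁻¹ * (lam - 1)⁻¹ + ⨆ s : ℤ, |η s|, fun t => ?_⟩
  calc |seriesSolution m η t| = |(seriesSolution m η t - η t) + η t| := by rw [sub_add_cancel]
    _ ≤ |seriesSolution m η t - η t| + |η t| := abs_add_le _ _
    _ ≤ _ := add_le_add (abs_seriesSolution_sub_le hprod hlam hη t) (hη.abs_le_iSup t)

lemma seriesSolution_sub {m : ℤ → ℝ} {C lam : ℝ}
    (hprod : SlopeDecay m C lam) (hlam : 1 < lam) {η : ℤ → ℝ} (hη : BddSeq η) (t : ℤ) :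
    seriesSolution m η t - m (t - 1) * seriesSolution m η (t - 1) = η t := by
  rw [seriesSolution, seriesSolution, (summable_seriesTerm hprod hlam hη t).tsum_eq_zero_add]
  simp only [seriesTerm_zero, seriesTerm_succ, tsum_mul_left]
  ring

/-- A bounded solution of the homogeneous system vanishes. -/
lemma BddSeq.eq_zero_of_homogeneous {m : ℤ → ℝ} {C lam : ℝ}
    (hprod : SlopeDecay m C lam) (hlam : 1 < lam) {d : ℤ → ℝ} (hd : BddSeq d)
    (hrec : ∀ t : ℤ, d t = m (t - 1) * d (t - 1)) (t : ℤ) : d t = 0 := by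
  have hterm : ∀ (k : ℕ) (s : ℤ), d s = seriesTerm m d s k := by
    intro k
    induction k with
    | zero => intro s; rw [seriesTerm_zero, ← hrec]
    | succ k ih => intro s; rw [seriesTerm_succ, ← ih, ← hrec]
  refine tendsto_nhds_unique ?_ (summable_seriesTerm hprod hlam hd t).tendsto_atTop_zero
  exact tendsto_const_nhds.congr fun k => hterm k t

lemma eq_seriesSolution {m : ℤ → ℝ} {C lam : ℝ}
    (hprod : SlopeDecay m C lam) (hlam : 1 < lam) {η ζ : ℤ → ℝ} (hη : BddSeq η) (hζ : BddSeq ζ)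
    (hsol : ∀ t : ℤ, ζ t - m (t - 1) * ζ (t - 1) = η t) : ζ = seriesSolution m η := by
  have hd : BddSeq fun t => ζ t - seriesSolution m η t := by
    obtain ⟨M, hM⟩ := hζ
    obtain ⟨N, hN⟩ := bddSeq_seriesSolution hprod hlam hη
    exact ⟨M + N, fun t => (abs_sub _ _).trans (add_le_add (hM t) (hN t))⟩
  funext t
  refine sub_eq_zero.1 (hd.eq_zero_of_homogeneous hprod hlam (fun s => ?_) t)
  linear_combination hsol s - seriesSolution_sub hprod hlam hη s

/-- if the slope products decay as ∏|m| ≤ C⁻¹·λ^{−k}, then for every bounded η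
the system ζ_t − m_{t−1}ζ_{t−1} = η_t has a unique bounded solution, given by the explicit
series, and satisfying |ζ_t − η_t| ≤ ‖η‖∞ C⁻¹ (λ−1)⁻¹. -/
theorem contracting_case_unique_bounded_solution
    (m : ℤ → ℝ) (hm : ∀ t : ℤ, m t ≠ 0)
    (C lam : ℝ) (hC : 0 < C) (hlam : 1 < lam)
    (hprod : ∀ t : ℤ, ∀ k : ℕ, 1 ≤ k →
      ∏ n ∈ Finset.range k, |m (t + n)| ≤ C⁻¹ * lam⁻¹ ^ k)
    (η : ℤ → ℝ) (hη : BddSeq η) :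
    (∃! ζ : ℤ → ℝ, BddSeq ζ ∧ ∀ t : ℤ, ζ t - m (t - 1) * ζ (t - 1) = η t) ∧
    ∀ ζ : ℤ → ℝ, BddSeq ζ → (∀ t : ℤ, ζ t - m (t - 1) * ζ (t - 1) = η t) →
      (∀ t : ℤ, ζ t =
        η t + ∑' k : ℕ, (∏ n ∈ Finset.range (k + 1), m (t - 1 - k + n)) * η (t - 1 - k)) ∧
      (∀ t : ℤ, |ζ t - η t| ≤ (⨆ s : ℤ, |η s|) * C⁻¹ * (lam - 1)⁻¹) := by
  have huniq := fun ζ (hζ : BddSeq ζ) hsol => eq_seriesSolution (ζ := ζ) hprod hlam hη hζ hsol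
  refine ⟨⟨seriesSolution m η, ⟨bddSeq_seriesSolution hprod hlam hη,
    seriesSolution_sub hprod hlam hη⟩, fun ζ hζ => huniq ζ hζ.1 hζ.2⟩, fun ζ hζ hsol => ?_⟩
  rw [huniq ζ hζ hsol]
  exact ⟨fun t => rfl, abs_seriesSolution_sub_le hprod hlam hη⟩
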